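/- g(Ω) = Ω and g : Ω → Ω is a bijection. -/

import Mathlib

/-!
The map `g` rewrites `E`-segments into words of the same length which are exactly the
`F`-segments: `35^k` (followed by a letter `≠ 5`) becomes `42^{k-1}5` (followed by a letter
`≠ 5`), `42^k5` becomes `42^{k-1}55`, and `45` becomes `35`. The rewriting is injective on words,
so `g` is inverted by factoring the image into `F`-segments and rewriting backwards.

The relation `Paired x u p L` says that the window `[p, p + L)` of `u` is the rewriting of that of
`x`; it determines either window from the other (`Paired.right_unique`, `Paired.left_unique`).
A special segment is determined by its starting point, and special segments do not overlap, so a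
factorization into segments is the same as a left-to-right greedy one (`Greedy`,
`segDecomp_E_iff`); greedy factorizations exist and are unique for both notions of segment.
Hence `g` is `gRel_iff`: rewriting along the greedy `E`-factorization.

The heart is that, when `x` and `u` are paired along `b`, the factorization `b` is the greedy
`E`-factorization of `x` if and only if it is the greedy `F`-factorization of `u`
(`greedy_F_of_E`, `greedy_E_of_F`). Membership of `x` in `Ω` is used for the first direction only:
it excludes the tail `35^∞`, in which `3` is `E`-plain although `35` is `F`-special. Finally,
every rewritten word of length at least two contains a `5` on both sides, so far enough to the
right only single letters occur and membership in `Ω` passes between `x` and `u`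
(`mem_Omega_iff`).
-/

open MeasureTheory

noncomputable section

/-- The alphabet `{1,…,5}`, encoded as `Fin 5` (letter `k` is index `k-1`). -/
abbrev Letter := Fin 5

/-- The letter `1`. -/
def l1 : Letter := 0
/-- The letter `2`. -/
def l2 : Letter := 1
/-- The letter `3`. -/
def l3 : Letter := 2
/-- The letter `4`. -/
def l4 : Letter := 3
/-- The letter `5`. -/
def l5 : Letter := 4

/-- The digit set of `E`: `(d_1,…,d_5) = (0, 1, 2, 2+i, 1+2i)`. -/
def dE : Letter → ℂ := ![0, 1, 2, 2 + Complex.I, 1 + 2 * Complex.I]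

/-- The digit set of `F`: `(e_1,…,e_5) = (1+2i, 1+i, 1, 0, 2+i)`. -/
def dF : Letter → ℂ := ![1 + 2 * Complex.I, 1 + Complex.I, 1, 0, 2 + Complex.I]

/-- The map `φ^E_j(z) = (z + d_j)/3`. -/
def phiE (j : Letter) (z : ℂ) : ℂ := (z + dE j) / 3

/-- The map `φ^F_j(z) = (z + e_j)/3`. -/
def phiF (j : Letter) (z : ℂ) : ℂ := (z + dF j) / 3

/-- For a finite word `w = w_1⋯w_n`, the composition `φ_{w_1} ∘ ⋯ ∘ φ_{w_n}`
(the empty word gives the identity). -/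
def iterPhi (φ : Letter → ℂ → ℂ) : List Letter → ℂ → ℂ
  | [] => id
  | j :: w => φ j ∘ iterPhi φ w

/-- `K` is the attractor of the IFS `{φ_j}`: the (unique) nonempty compact set with
`K = ⋃_j φ_j(K)`. -/
def IsAttractor (φ : Letter → ℂ → ℂ) (K : Set ℂ) : Prop :=
  K.Nonempty ∧ IsCompact K ∧ K = ⋃ j, φ j '' K

/-- The prefix `x_1⋯x_n` of the sequence `x`. -/
def preWord (x : ℕ → Letter) (n : ℕ) : List Letter := List.ofFn fun i : Fin n => x i

/-- The factor `x_{j+1}⋯x_{j+L}` of `x` (`j` entries skipped, length `L`). -/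
def fword (x : ℕ → Letter) (j L : ℕ) : List Letter := List.ofFn fun i : Fin L => x (j + i)

/-- `p = π_K(x)`, i.e. `p` is the point of `⋂_{n≥1} φ_{x_1⋯x_n}(K)`. -/
def codes (φ : Letter → ℂ → ℂ) (K : Set ℂ) (x : ℕ → Letter) (p : ℂ) : Prop :=
  ∀ n, p ∈ iterPhi φ (preWord x n) '' K

/-- `Ω`: the sequences that are eventually constant equal to the letter `4`. -/
def OmegaSeq : Set (ℕ → Letter) := {x | ∃ N, ∀ n, N ≤ n → x n = l4}

/-- `Λ(x,y) = n`: the separation number of `(x,y)` for the IFS `φ` with attractor `K`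
is `n`, i.e. `n` is the largest integer with `φ_{x_1⋯x_n}(K) ∩ φ_{y_1⋯y_n}(K) ≠ ∅`. -/
def SepNum (φ : Letter → ℂ → ℂ) (K : Set ℂ) (x y : ℕ → Letter) (n : ℕ) : Prop :=
  (iterPhi φ (preWord x n) '' K ∩ iterPhi φ (preWord y n) '' K).Nonempty ∧
    ∀ m, n < m → iterPhi φ (preWord x m) '' K ∩ iterPhi φ (preWord y m) '' K = ∅

/-- The factor of `x` starting at position `j` (0-indexed) of length `L` is an
`E`-special segment: either `35^k` followed by a letter `≠ 5` (so `L = k+1`, `k ≥ 1`),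
or `42^{k-1}5` (so `L = k+1`, `k ≥ 1`). -/
def ESpecial (x : ℕ → Letter) (j L : ℕ) : Prop :=
  (2 ≤ L ∧ x j = l3 ∧ (∀ i, 1 ≤ i → i < L → x (j + i) = l5) ∧ x (j + L) ≠ l5) ∨
  (2 ≤ L ∧ x j = l4 ∧ (∀ i, 1 ≤ i → i < L - 1 → x (j + i) = l2) ∧ x (j + L - 1) = l5)

/-- The entry of `x` at position `j` is an `E`-plain segment: it belongs to no
`E`-special segment of `x`. -/
def EPlain (x : ℕ → Letter) (j : ℕ) : Prop :=
  ∀ p L, ESpecial x p L → ¬(p ≤ j ∧ j < p + L)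

/-- An `E`-segment: an `E`-special segment, or a single `E`-plain entry. -/
def ESegment (x : ℕ → Letter) (j L : ℕ) : Prop :=
  ESpecial x j L ∨ (L = 1 ∧ EPlain x j)

/-- The factor of `u` starting at position `j` of length `L` is an `F`-special segment:
`42^m5` followed by a letter `≠ 5` (`L = m+2`, `m ≥ 0`), or `42^m55` (`L = m+3`, `m ≥ 0`),
or `35` (`L = 2`). -/
def FSpecial (u : ℕ → Letter) (j L : ℕ) : Prop :=
  (2 ≤ L ∧ u j = l4 ∧ (∀ i, 1 ≤ i → i < L - 1 → u (j + i) = l2) ∧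
    u (j + L - 1) = l5 ∧ u (j + L) ≠ l5) ∨
  (3 ≤ L ∧ u j = l4 ∧ (∀ i, 1 ≤ i → i < L - 2 → u (j + i) = l2) ∧
    u (j + L - 2) = l5 ∧ u (j + L - 1) = l5) ∨
  (L = 2 ∧ u j = l3 ∧ u (j + 1) = l5)

/-- The entry of `u` at position `j` is an `F`-plain segment. -/
def FPlain (u : ℕ → Letter) (j : ℕ) : Prop :=
  ∀ p L, FSpecial u p L → ¬(p ≤ j ∧ j < p + L)

/-- An `F`-segment: an `F`-special segment, or a single `F`-plain entry. -/
def FSegment (u : ℕ → Letter) (j L : ℕ) : Prop :=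
  FSpecial u j L ∨ (L = 1 ∧ FPlain u j)

/-- `b` enumerates the starting positions of a factorization of `x` into consecutive
segments: `b 0 = 0` and for each `j`, the factor occupying positions `[b j, b (j+1))`
is a segment (in the sense of `Seg`). -/
def SegDecomp (Seg : (ℕ → Letter) → ℕ → ℕ → Prop) (x : ℕ → Letter) (b : ℕ → ℕ) : Prop :=
  b 0 = 0 ∧ ∀ j, Seg x (b j) (b (j + 1) - b j)

/-- The word map `g₀`: `35^k ↦ 42^{k-1}5`, `42^k5 ↦ 42^{k-1}55` (`k ≥ 1`), `45 ↦ 35`,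
and `a ↦ a` for single letters.  (All these maps preserve length.) -/
def g0 (w : List Letter) : List Letter :=
  if w.length ≤ 1 then w
  else if w = [l4, l5] then [l3, l5]
  else if w.headI = l3 then l4 :: (List.replicate (w.length - 2) l2 ++ [l5])
  else l4 :: (List.replicate (w.length - 3) l2 ++ [l5, l5])

/-- `u = g(x)`: for some `E`-segment decomposition `x = X₁X₂⋯` (with starting positions
`b`), the sequence `u` is `g₀(X₁)g₀(X₂)⋯`, each `g₀(X_j)` occupying the positions
of `X_j` (note that `g₀` preserves lengths). -/
def gRel (x u : ℕ → Letter) : Prop :=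
  ∃ b : ℕ → ℕ, SegDecomp ESegment x b ∧
    ∀ j, fword u (b j) (b (j + 1) - b j) = g0 (fword x (b j) (b (j + 1) - b j))

/-- `E' = π_E(Ω)`. -/
def Eset' (E : Set ℂ) : Set ℂ := {p | ∃ x ∈ OmegaSeq, codes phiE E x p}

/-- `F' = π_F(Ω)`. -/
def Fset' (F : Set ℂ) : Set ℂ := {q | ∃ u ∈ OmegaSeq, codes phiF F u q}

/-- The dimension `s = log 5 / log 3`. -/
def sDim : ℝ := Real.log 5 / Real.log 3

end

/-! ### Windows related by the word map -/

/-- On the window `[p, p + L)`, the word of `u` is obtained from the word of `x` by one of the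
four rules of `g₀`: a single letter is kept, `35^k ↦ 42^{k-1}5`, `42^k5 ↦ 42^{k-1}55` with
`k ≥ 1`, or `45 ↦ 35`. Letters outside the window are not constrained. -/
def Paired (x u : ℕ → Letter) (p L : ℕ) : Prop :=
  (L = 1 ∧ u p = x p) ∨
  (2 ≤ L ∧ x p = l3 ∧ (∀ i, 1 ≤ i → i < L → x (p + i) = l5) ∧
    u p = l4 ∧ (∀ i, 1 ≤ i → i < L - 1 → u (p + i) = l2) ∧ u (p + L - 1) = l5) ∨
  (3 ≤ L ∧ x p = l4 ∧ (∀ i, 1 ≤ i → i < L - 1 → x (p + i) = l2) ∧ x (p + L - 1) = l5 ∧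
    u p = l4 ∧ (∀ i, 1 ≤ i → i < L - 2 → u (p + i) = l2) ∧
    u (p + L - 2) = l5 ∧ u (p + L - 1) = l5) ∨
  (L = 2 ∧ x p = l4 ∧ x (p + 1) = l5 ∧ u p = l3 ∧ u (p + 1) = l5)

theorem fword_eq_iff (u : ℕ → Letter) (p L : ℕ) (W : List Letter) :
    fword u p L = W ↔ W.length = L ∧ ∀ i, i < L → W[i]? = some (u (p + i)) := by
  constructor
  · rintro rfl
    simp +contextual [fword]
  · rintro ⟨hl, h⟩
    apply List.ext_getElem?
    intro i
    by_cases hi : i < L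
    · rw [h i hi]; simp [fword, hi]
    · rw [List.getElem?_eq_none (l := W) (by omega),
        List.getElem?_eq_none (by simp [fword]; omega)]

theorem letters_ne : l2 ≠ l3 ∧ l2 ≠ l4 ∧ l2 ≠ l5 ∧ l3 ≠ l4 ∧ l3 ≠ l5 ∧ l4 ≠ l5 := by decide

theorem ESpecial.two_le {x : ℕ → Letter} {p L : ℕ} (h : ESpecial x p L) : 2 ≤ L := by
  rcases h with h | h <;> exact h.1

theorem FSpecial.two_le {x : ℕ → Letter} {p L : ℕ} (h : FSpecial x p L) : 2 ≤ L := by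
  rcases h with h | h | h <;> omega

theorem fword_one (x : ℕ → Letter) (p : ℕ) : fword x p 1 = [x p] := by
  simp [fword]

theorem fword_length (x : ℕ → Letter) (p L : ℕ) : (fword x p L).length = L := by
  simp [fword]

theorem fword_headI (x : ℕ → Letter) (p L : ℕ) (hL : 1 ≤ L) : (fword x p L).headI = x p := by
  obtain ⟨L, rfl⟩ := Nat.exists_eq_add_of_le' hL
  simp [fword, List.ofFn_succ]

theorem fword_two (x : ℕ → Letter) (p : ℕ) : fword x p 2 = [x p, x (p + 1)] := by
  simp [fword, List.ofFn_succ]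

/-- On a window that is an `E`-special segment or a single letter, `Paired` is the word equation
defining `g`. -/
theorem fword_eq_g0_iff {x u : ℕ → Letter} {p L : ℕ} (h : ESpecial x p L ∨ L = 1) :
    fword u p L = g0 (fword x p L) ↔ Paired x u p L := by
  obtain ⟨h23, h24, h25, h34, h35, h45⟩ := letters_ne
  rcases h with h | rfl
  swap
  · simp [g0, fword_one, Paired]
  have hL := h.two_le
  have h0 : g0 (fword x p L) = if x p = l3 then l4 :: (List.replicate (L - 2) l2 ++ [l5])
      else if L = 2 then [l3, l5] else l4 :: (List.replicate (L - 3) l2 ++ [l5, l5]) := by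
    unfold g0
    rw [fword_length, fword_headI x p L (by omega), if_neg (by omega)]
    by_cases h2 : L = 2
    · subst h2
      rw [fword_two]
      rcases h with h | h
      · simp [h.2.1, h34]
      · have h5 : x (p + 1) = l5 := h.2.2.2
        simp [h.2.1, h5, h34.symm]
    · have : fword x p L ≠ [l4, l5] := by
        intro hh
        have := congrArg List.length hh
        rw [fword_length] at this
        exact h2 this
      simp [this, h2]
  rw [h0, fword_eq_iff]
  rcases h with ⟨-, hx, hx5, hn⟩ | ⟨-, hx, hx2, hx5⟩
  · rw [if_pos hx]
    constructor
    · rintro ⟨-, hu⟩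
      refine Or.inr (Or.inl ⟨hL, hx, hx5, ?_, ?_, ?_⟩)
      · have := hu 0 (by omega); simpa using this.symm
      · intro i hi hi'
        have := hu i (by omega)
        obtain ⟨i, rfl⟩ := Nat.exists_eq_add_of_le' hi
        have h' : i < L - 2 := by omega
        simpa [List.getElem?_append, h', eq_comm] using this
      · have := hu (L - 1) (by omega)
        obtain ⟨L, rfl⟩ := Nat.exists_eq_add_of_le' hL
        simpa [List.getElem?_append, eq_comm] using this
    · intro hP
      rcases hP with hP | hP | hP | hP
      · omega
      · obtain ⟨-, -, -, a, b, c⟩ := hP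
        refine ⟨by simp; omega, ?_⟩
        intro i hi
        rcases i with _ | i
        · simp [a]
        by_cases hi' : i + 1 < L - 1
        · have h' : i < L - 2 := by omega
          simp [List.getElem?_append, h', b (i + 1) (by omega) hi']
        · obtain rfl : L = i + 2 := by omega
          simpa [List.getElem?_append, eq_comm] using c
      · simp_all
      · simp_all
  · rw [if_neg (by rw [hx]; exact h34.symm)]
    by_cases h2 : L = 2
    · subst h2
      rw [if_pos rfl]
      constructor
      · rintro ⟨-, hu⟩
        refine Or.inr (Or.inr (Or.inr ⟨rfl, hx, hx5, ?_, ?_⟩))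
        · have := hu 0 (by omega); simpa using this.symm
        · have := hu 1 (by omega); simpa using this.symm
      · intro hP
        rcases hP with hP | hP | hP | hP
        · omega
        · simp_all
        · omega
        · refine ⟨rfl, ?_⟩
          intro i hi
          interval_cases i <;> simp [hP]
    · rw [if_neg h2]
      constructor
      · rintro ⟨-, hu⟩
        refine Or.inr (Or.inr (Or.inl ⟨by omega, hx, hx2, hx5, ?_, ?_, ?_, ?_⟩))
        · have := hu 0 (by omega); simpa using this.symm
        · intro i hi hi'
          have := hu i (by omega)
          obtain ⟨i, rfl⟩ := Nat.exists_eq_add_of_le' hi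
          have h' : i < L - 3 := by omega
          simpa [List.getElem?_append, h', eq_comm] using this
        · have := hu (L - 2) (by omega)
          obtain ⟨L, rfl⟩ := Nat.exists_eq_add_of_le' (show 3 ≤ L by omega)
          have e : p + (L + 3) - 2 = p + (L + 1) := by omega
          simpa [e, List.getElem?_append, eq_comm] using this
        · have := hu (L - 1) (by omega)
          obtain ⟨L, rfl⟩ := Nat.exists_eq_add_of_le' (show 3 ≤ L by omega)
          simpa [List.getElem?_append, eq_comm] using this
      · intro hP
        rcases hP with hP | hP | hP | hP
        · omega
        · simp_all
        · obtain ⟨h3, -, -, -, a, b, c, d⟩ := hP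
          refine ⟨by simp; omega, ?_⟩
          intro i hi
          rcases i with _ | i
          · simp [a]
          by_cases hi' : i + 1 < L - 2
          · have h' : i < L - 3 := by omega
            simp [List.getElem?_append, h', b (i + 1) (by omega) hi']
          · obtain rfl | rfl : L = i + 2 ∨ L = i + 3 := by omega
            · obtain ⟨i, rfl⟩ := Nat.exists_eq_add_of_le' (show 1 ≤ i by omega)
              simpa [List.getElem?_append, eq_comm] using d
            · have e : p + (i + 3) - 2 = p + (i + 1) := by omega
              simpa [e, List.getElem?_append, eq_comm] using c
        · omega

/-! ### Special segments -/

/-- `E`-special segments do not overlap: they start with `3` or `4` and contain neither of these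
letters afterwards. -/
theorem ESpecial.le_of_lt {x : ℕ → Letter} {p L q M : ℕ} (h : ESpecial x p L)
    (h' : ESpecial x q M) (hpq : p < q) : p + L ≤ q := by
  obtain ⟨h23, h24, h25, h34, h35, h45⟩ := letters_ne
  by_contra! hlt
  obtain ⟨i, rfl⟩ := Nat.exists_eq_add_of_lt hpq
  have hq : x (p + i + 1) = l3 ∨ x (p + i + 1) = l4 := by
    rcases h' with h' | h'
    · exact .inl h'.2.1
    · exact .inr h'.2.1
  rcases h with ⟨-, -, h, -⟩ | ⟨-, -, h, h5⟩
  · have := h (i + 1) (by omega) (by omega)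
    rw [← add_assoc] at this
    grind
  · by_cases hi : i + 1 < L - 1
    · have := h (i + 1) (by omega) hi
      rw [← add_assoc] at this
      grind
    · have : p + L - 1 = p + i + 1 := by omega
      rw [this] at h5
      grind

/-- By symmetry, an `E`-special segment is determined by its starting point. -/
theorem ESpecial.len_le {x : ℕ → Letter} {p L M : ℕ} (h : ESpecial x p L)
    (h' : ESpecial x p M) : M ≤ L := by
  obtain ⟨h23, h24, h25, h34, h35, h45⟩ := letters_ne
  by_contra! hlt
  rcases h with ⟨hL, h0, h, h5⟩ | ⟨hL, h0, h, h5⟩ <;>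
    rcases h' with ⟨hM, h0', h', h5'⟩ | ⟨hM, h0', h', h5'⟩
  · exact h5 (h' L (by omega) hlt)
  · grind
  · grind
  · have := h' (L - 1) (by omega) (by omega)
    rw [← Nat.add_sub_assoc (by omega)] at this
    grind

/-- By symmetry, an `F`-special segment is determined by its starting point. -/
theorem FSpecial.len_le {x : ℕ → Letter} {p L M : ℕ} (h : FSpecial x p L)
    (h' : FSpecial x p M) : M ≤ L := by
  obtain ⟨h23, h24, h25, h34, h35, h45⟩ := letters_ne
  by_contra! hlt
  rcases h with ⟨hL, h0, h, h5, hn⟩ | ⟨hL, h0, h, h5, h55⟩ | ⟨hL, h0, h5⟩ <;>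
    rcases h' with ⟨hM, h0', h', h5', hn'⟩ | ⟨hM, h0', h', h5', h55'⟩ | ⟨hM, h0', h5'⟩
  · have := h' (L - 1) (by omega) (by omega)
    rw [← Nat.add_sub_assoc (by omega)] at this
    grind
  · by_cases hc : M = L + 1
    · subst hc; exact hn h55'
    · have := h' (L - 1) (by omega) (by omega)
      rw [← Nat.add_sub_assoc (by omega)] at this
      grind
  · grind
  · have := h' (L - 2) (by omega) (by omega)
    rw [← Nat.add_sub_assoc (by omega)] at this
    grind
  · have := h' (L - 2) (by omega) (by omega)
    rw [← Nat.add_sub_assoc (by omega)] at this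
    grind
  all_goals grind

/-! ### Greedy factorizations -/

/-- `b` lists the boundaries of the greedy factorization for the special segments `Sp`
(`Sp p L`: a special segment of length `L` starts at `p`): each block is special, or it is a
single position at which no special segment starts. Unlike for plain segments, nothing is required
of special segments starting further left. -/
def Greedy (Sp : ℕ → ℕ → Prop) (b : ℕ → ℕ) : Prop :=
  b 0 = 0 ∧ ∀ j, b j < b (j + 1) ∧ (Sp (b j) (b (j + 1) - b j) ∨
    (b (j + 1) - b j = 1 ∧ ∀ M, ¬ Sp (b j) M))

theorem Greedy.strictMono {Sp : ℕ → ℕ → Prop} {b : ℕ → ℕ} (h : Greedy Sp b) : StrictMono b :=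
  strictMono_nat_of_lt_succ fun j => (h.2 j).1

theorem Greedy.unique {Sp : ℕ → ℕ → Prop} (hu : ∀ p L M, Sp p L → Sp p M → M ≤ L)
    {b c : ℕ → ℕ} (hb : Greedy Sp b) (hc : Greedy Sp c) : b = c := by
  funext j
  induction j with
  | zero => rw [hb.1, hc.1]
  | succ j ih =>
    obtain ⟨b1, b2⟩ := hb.2 j
    obtain ⟨c1, c2⟩ := hc.2 j
    rw [← ih] at c1 c2
    rcases b2 with b2 | b2 <;> rcases c2 with c2 | c2
    · have := hu _ _ _ b2 c2
      have := hu _ _ _ c2 b2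
      omega
    · exact absurd b2 (c2.2 _)
    · exact absurd c2 (b2.2 _)
    · omega

theorem Greedy.exists {Sp : ℕ → ℕ → Prop} (hpos : ∀ {p L}, Sp p L → 2 ≤ L) :
    ∃ b, Greedy Sp b := by
  have step : ∀ p, ∃ q, p < q ∧ (Sp p (q - p) ∨ (q - p = 1 ∧ ∀ M, ¬ Sp p M)) := by
    intro p
    by_cases h : ∃ L, Sp p L
    · obtain ⟨L, hL⟩ := h
      have := hpos hL
      exact ⟨p + L, by omega, .inl (by simpa using hL)⟩
    · exact ⟨p + 1, by omega, .inr ⟨by omega, by simpa using h⟩⟩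
  choose nxt hn using step
  exact ⟨fun j => nxt^[j] 0, rfl, fun j => by
    simp only [Function.iterate_succ_apply']
    exact hn _⟩

theorem exists_block {b : ℕ → ℕ} (h0 : b 0 = 0) (hb : StrictMono b) (n : ℕ) :
    ∃ j, b j ≤ n ∧ n < b (j + 1) := by
  induction n with
  | zero => exact ⟨0, by omega, by have := hb (show 0 < 0 + 1 by omega); omega⟩
  | succ n ih =>
    obtain ⟨j, h1, h2⟩ := ih
    by_cases h : n + 1 < b (j + 1)
    · exact ⟨j, by omega, h⟩
    · exact ⟨j + 1, by omega, by have := hb (show j + 1 < j + 1 + 1 by omega); omega⟩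

theorem block_unique {b : ℕ → ℕ} (hb : StrictMono b) {n j k : ℕ} (h1 : b j ≤ n)
    (h2 : n < b (j + 1)) (h3 : b k ≤ n) (h4 : n < b (k + 1)) : j = k := by
  have h5 := hb.lt_iff_lt.1 (h1.trans_lt h4)
  have h6 := hb.lt_iff_lt.1 (h3.trans_lt h2)
  omega

/-- Since special segments do not overlap, none of them reaches across a boundary of a greedy
factorization, so a position where none starts is a plain one. -/
theorem segDecomp_E_iff {x : ℕ → Letter} {b : ℕ → ℕ} :
    SegDecomp ESegment x b ↔ Greedy (ESpecial x) b := by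
  constructor
  · rintro ⟨h0, h⟩
    refine ⟨h0, fun j => ?_⟩
    rcases h j with h | ⟨h, hp⟩
    · have := h.two_le
      exact ⟨by omega, .inl h⟩
    · exact ⟨by omega, .inr ⟨h, fun M hM => hp _ _ hM ⟨le_rfl, by have := hM.two_le; omega⟩⟩⟩
  · intro h
    refine ⟨h.1, fun j => ?_⟩
    rcases (h.2 j).2 with h1 | ⟨h1, h2⟩
    · exact .inl h1
    refine .inr ⟨h1, fun p L hp hc => ?_⟩
    rcases hc.1.eq_or_lt with rfl | hlt
    · exact h2 _ hp
    -- A special segment from `p < b j` across `b j` would meet the block `k` containing `p`,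
    -- which ends at or before `b j`.
    obtain ⟨k, hk1, hk2⟩ := exists_block h.1 h.strictMono p
    have hkj : b (k + 1) ≤ b j := by
      refine h.strictMono.monotone ?_
      have := h.strictMono.lt_iff_lt.1 (hk1.trans_lt hlt)
      omega
    rcases (h.2 k).2 with h3 | ⟨h3, h4⟩
    · rcases hk1.eq_or_lt with hk | hk
      · subst hk
        have := h3.len_le hp
        omega
      · have := h3.le_of_lt hp hk
        omega
    · obtain rfl : p = b k := by omega
      exact h4 _ hp

theorem gRel_iff {x u : ℕ → Letter} : gRel x u ↔ ∃ b, Greedy (ESpecial x) b ∧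
    ∀ j, Paired x u (b j) (b (j + 1) - b j) := by
  unfold gRel
  refine exists_congr fun b => ?_
  rw [segDecomp_E_iff]
  refine and_congr_right fun hb => forall_congr' fun j => fword_eq_g0_iff ?_
  rcases (hb.2 j).2 with h | h
  · exact .inl h
  · exact .inr h.1

/-! ### Rewriting windows in both directions -/

theorem Paired.right_unique {x u v : ℕ → Letter} {p L : ℕ} (h : Paired x u p L)
    (h' : Paired x v p L) {n : ℕ} (h1 : p ≤ n) (h2 : n < p + L) : u n = v n := by
  obtain ⟨h23, h24, h25, h34, h35, h45⟩ := letters_ne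
  obtain ⟨i, rfl⟩ := Nat.exists_eq_add_of_le h1
  have hi : i = 0 ∨ (1 ≤ i ∧ i < L - 2) ∨ (1 ≤ i ∧ i + 2 = L) ∨ (1 ≤ i ∧ i + 1 = L) := by omega
  rcases h with h | h | h | h <;> rcases h' with h' | h' | h' | h' <;>
    rcases hi with hi | hi | hi | hi <;> grind

theorem Paired.left_unique {x y u : ℕ → Letter} {p L : ℕ} (h : Paired x u p L)
    (h' : Paired y u p L) {n : ℕ} (h1 : p ≤ n) (h2 : n < p + L) : x n = y n := by
  obtain ⟨h23, h24, h25, h34, h35, h45⟩ := letters_ne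
  obtain ⟨i, rfl⟩ := Nat.exists_eq_add_of_le h1
  have hi : i = 0 ∨ (1 ≤ i ∧ i < L - 1) ∨ (1 ≤ i ∧ i + 1 = L) := by omega
  rcases h with h | h | h | h <;> rcases h' with h' | h' | h' | h'
  case inr.inl.inr.inr.inl =>
    -- `42^{k-1}5` and `42^{m-1}55` of equal length differ in their last but one letter.
    have := h.2.2.2.2.1 (L - 2) (by omega) (by omega)
    rw [← Nat.add_sub_assoc (by omega)] at this
    grind
  case inr.inr.inl.inr.inl =>
    have := h'.2.2.2.2.1 (L - 2) (by omega) (by omega)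
    rw [← Nat.add_sub_assoc (by omega)] at this
    grind
  all_goals rcases hi with hi | hi | hi <;> grind

theorem Paired.congr {x u x' u' : ℕ → Letter} {p L : ℕ} (h : Paired x u p L)
    (hx : ∀ n, p ≤ n → n < p + L → x' n = x n) (hu : ∀ n, p ≤ n → n < p + L → u' n = u n) :
    Paired x' u' p L := by
  rcases h with h | h | h | h
  · exact .inl (by grind)
  · exact .inr (.inl (by grind))
  · exact .inr (.inr (.inl (by grind)))
  · exact .inr (.inr (.inr (by grind)))

theorem exists_paired_right {x : ℕ → Letter} {p L : ℕ} (h : ESpecial x p L ∨ L = 1) :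
    ∃ u, Paired x u p L := by
  rcases h with (h | h) | rfl
  · exact ⟨fun n => if n = p then l4 else if n = p + L - 1 then l5 else l2,
      .inr (.inl (by grind))⟩
  · by_cases h2 : L = 2
    · exact ⟨fun n => if n = p then l3 else l5, .inr (.inr (.inr (by grind)))⟩
    · exact ⟨fun n => if n = p then l4 else if p + L - 2 ≤ n then l5 else l2,
        .inr (.inr (.inl (by grind)))⟩
  · exact ⟨x, .inl ⟨rfl, rfl⟩⟩

theorem exists_paired_left {u : ℕ → Letter} {p L : ℕ} (h : FSpecial u p L ∨ L = 1) :
    ∃ x, Paired x u p L := by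
  rcases h with (h | h | h) | rfl
  · exact ⟨fun n => if n = p then l3 else l5, .inr (.inl (by grind))⟩
  · exact ⟨fun n => if n = p then l4 else if n = p + L - 1 then l5 else l2,
        .inr (.inr (.inl (by grind)))⟩
  · exact ⟨fun n => if n = p then l4 else l5, .inr (.inr (.inr (by grind)))⟩
  · exact ⟨u, .inl ⟨rfl, rfl⟩⟩

/-- The letters `2` and `5` occur at the start of a window only in windows of length one, hence
simultaneously in `x` and `u`. -/
theorem Paired.start {x u : ℕ → Letter} {p L : ℕ} (h : Paired x u p L) :
    (x p = l5 ↔ u p = l5) ∧ (x p = l2 ↔ u p = l2) ∧ (x p = l2 → L = 1) := by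
  obtain ⟨h23, h24, h25, h34, h35, h45⟩ := letters_ne
  rcases h with h | h | h | h <;> grind

/-- Windows of length at least two contain a `5` on both sides. -/
theorem Paired.const_four {x u : ℕ → Letter} {p L : ℕ} (h : Paired x u p L)
    (h4 : (∀ n, p ≤ n → x n = l4) ∨ ∀ n, p ≤ n → u n = l4) :
    L = 1 ∧ x p = l4 ∧ u p = l4 := by
  obtain ⟨h23, h24, h25, h34, h35, h45⟩ := letters_ne
  rcases h with h | h | h | h
  · rcases h4 with h4 | h4 <;> grind
  · have := h.2.2.1 1 (by omega) (by omega)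
    rcases h4 with h4 | h4 <;> grind
  · rcases h4 with h4 | h4 <;> grind
  · rcases h4 with h4 | h4 <;> grind

/-! ### Transport of factorizations -/

section Transport

variable {x u : ℕ → Letter} {b : ℕ → ℕ}

/-- From a boundary on, each letter `2` (in `x` or in `u`) is a block of its own. -/
theorem run_of_twos (hb : StrictMono b) (hP : ∀ j, Paired x u (b j) (b (j + 1) - b j))
    {k m : ℕ} (h : ∀ i, i < m → x (b k + i) = l2 ∨ u (b k + i) = l2) :
    ∀ i, i ≤ m → b (k + i) = b k + i := by
  intro i
  induction i with
  | zero => simp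
  | succ i ih =>
    intro hi
    have e := ih (by omega)
    obtain ⟨-, h2, h1⟩ := (hP (k + i)).start
    have h3 := h i (by omega)
    rw [← e] at h3
    have h4 := h1 (by tauto)
    have := hb (show k + i < k + i + 1 by omega)
    rw [← add_assoc]
    omega

theorem mem_Omega_iff (h0 : b 0 = 0) (hb : StrictMono b)
    (hP : ∀ j, Paired x u (b j) (b (j + 1) - b j)) : x ∈ OmegaSeq ↔ u ∈ OmegaSeq := by
  have key : ∀ N, ((∀ n, N ≤ n → x n = l4) ∨ ∀ n, N ≤ n → u n = l4) →
      ∀ n, b N ≤ n → x n = l4 ∧ u n = l4 := by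
    intro N h n hn
    obtain ⟨j, h1, h2⟩ := exists_block h0 hb n
    have hj : N ≤ j := by
      have := hb.lt_iff_lt.1 (hn.trans_lt h2)
      omega
    have hN : N ≤ b j := hj.trans (hb.le_apply)
    obtain ⟨hl, hx, hu⟩ := (hP j).const_four
      (h.imp (fun h n hn => h n (hN.trans hn)) (fun h n hn => h n (hN.trans hn)))
    obtain rfl : n = b j := by omega
    exact ⟨hx, hu⟩
  constructor
  · rintro ⟨N, h⟩
    exact ⟨b N, fun n hn => (key N (.inl h) n hn).2⟩
  · rintro ⟨N, h⟩
    exact ⟨b N, fun n hn => (key N (.inr h) n hn).1⟩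

/-- A factor `35` of a sequence in `Ω` starts an `E`-special segment, as its run of `5`s ends. -/
theorem exists_ESpecial_of_three (hx : x ∈ OmegaSeq) {p : ℕ} (h3 : x p = l3)
    (h5 : x (p + 1) = l5) : ∃ L, ESpecial x p L := by
  obtain ⟨N, hN⟩ := hx
  have hex : ∃ i, 1 ≤ i ∧ x (p + i) ≠ l5 :=
    ⟨N + 1, by omega, by rw [hN _ (by omega)]; decide⟩
  classical
  obtain ⟨hs1, hs2⟩ := Nat.find_spec hex
  refine ⟨Nat.find hex, .inl ⟨?_, h3, fun i hi hlt => ?_, hs2⟩⟩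
  · by_contra hlt
    have : Nat.find hex = 1 := by omega
    rw [this] at hs2
    exact hs2 h5
  · have := Nat.find_min hex hlt
    tauto

/-- After a block of length one, a run of `2`s in `x` or `u` is a run in both, and the letter
following the run is `5` in both or in neither. -/
theorem twos_after_single (hb : StrictMono b) (hP : ∀ j, Paired x u (b j) (b (j + 1) - b j))
    {j m : ℕ} (h1 : b (j + 1) = b j + 1)
    (h : ∀ i, 1 ≤ i → i < m → x (b j + i) = l2 ∨ u (b j + i) = l2) (hm : 1 ≤ m) :
    (∀ i, 1 ≤ i → i < m → x (b j + i) = l2 ∧ u (b j + i) = l2) ∧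
      (x (b j + m) = l5 ↔ u (b j + m) = l5) := by
  have hr := run_of_twos hb hP (k := j + 1) (m := m - 1) (fun i hi => by
    rw [h1, add_assoc, add_comm 1 i]
    exact h (i + 1) (by omega) (by omega))
  have hr' : ∀ i, 1 ≤ i → i ≤ m → b (j + i) = b j + i := by
    intro i hi hi'
    have := hr (i - 1) (by omega)
    rw [show j + 1 + (i - 1) = j + i by omega] at this
    omega
  constructor
  · intro i hi hi'
    have h2 := (hP (j + i)).start.2.1
    rw [hr' i hi (by omega)] at h2
    have := h i hi hi'
    tauto
  · have h2 := (hP (j + m)).start.1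
    rwa [hr' m hm le_rfl] at h2

/-- Membership in `Ω` is essential: `35^∞` and `45^∞` both have image `35^∞`. -/
theorem greedy_F_of_E (hx : x ∈ OmegaSeq) (hb : Greedy (ESpecial x) b)
    (hP : ∀ j, Paired x u (b j) (b (j + 1) - b j)) : Greedy (FSpecial u) b := by
  obtain ⟨h23, h24, h25, h34, h35, h45⟩ := letters_ne
  refine ⟨hb.1, fun j => ⟨(hb.2 j).1, ?_⟩⟩
  have hlt := (hb.2 j).1
  rcases (hb.2 j).2 with h | ⟨hl, hn⟩
  · left
    have h2 := h.two_le
    rcases hP j with hp | hp | hp | hp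
    · omega
    · refine .inl ⟨h2, hp.2.2.2.1, hp.2.2.2.2.1, hp.2.2.2.2.2, ?_⟩
      have h5 := (hP (j + 1)).start.1
      rw [show b j + (b (j + 1) - b j) = b (j + 1) by omega, Ne, ← h5]
      rcases h with h | h
      · have := h.2.2.2
        rwa [show b j + (b (j + 1) - b j) = b (j + 1) by omega] at this
      · grind
    · exact .inr (.inl ⟨hp.1, hp.2.2.2.2⟩)
    · exact .inr (.inr ⟨hp.1, hp.2.2.2⟩)
  · refine .inr ⟨hl, fun M hM => ?_⟩
    have hxu : u (b j) = x (b j) := by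
      rcases hP j with hp | hp | hp | hp
      · exact hp.2
      all_goals omega
    have hs : b (j + 1) = b j + 1 := by omega
    have four : ∀ m, 1 ≤ m → u (b j) = l4 → (∀ i, 1 ≤ i → i < m → u (b j + i) = l2) →
        u (b j + m) = l5 → False := by
      intro m hm h4 hi h5
      obtain ⟨ha, hc⟩ := twos_after_single hb.strictMono hP hs (fun i h1 h2 => .inr (hi i h1 h2)) hm
      exact hn (m + 1) (.inr ⟨by omega, by rw [← hxu, h4], fun i h1 h2 => (ha i h1 h2).1,
        hc.2 h5⟩)
    rcases hM with hM | hM | hM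
    · refine four (M - 1) (by omega) hM.2.1 hM.2.2.1 ?_
      rw [← Nat.add_sub_assoc (by omega)]
      exact hM.2.2.2.1
    · refine four (M - 2) (by omega) hM.2.1 hM.2.2.1 ?_
      rw [← Nat.add_sub_assoc (by omega)]
      exact hM.2.2.2.1
    · have h5 := (hP (j + 1)).start.1
      rw [hs] at h5
      obtain ⟨L, hL⟩ := exists_ESpecial_of_three hx (hxu ▸ hM.2.1) (h5.2 hM.2.2)
      exact hn L hL

theorem greedy_E_of_F (hb : Greedy (FSpecial u) b)
    (hP : ∀ j, Paired x u (b j) (b (j + 1) - b j)) : Greedy (ESpecial x) b := by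
  obtain ⟨h23, h24, h25, h34, h35, h45⟩ := letters_ne
  refine ⟨hb.1, fun j => ⟨(hb.2 j).1, ?_⟩⟩
  have hlt := (hb.2 j).1
  rcases (hb.2 j).2 with h | ⟨hl, hn⟩
  · left
    have h2 := h.two_le
    rcases hP j with hp | hp | hp | hp
    · omega
    · refine .inl ⟨h2, hp.2.1, hp.2.2.1, ?_⟩
      have h5 := (hP (j + 1)).start.1
      rw [show b j + (b (j + 1) - b j) = b (j + 1) by omega, Ne, h5]
      rcases h with h | h | h
      · have := h.2.2.2.2
        rwa [show b j + (b (j + 1) - b j) = b (j + 1) by omega] at this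
      · have := hp.2.2.2.2.1 (b (j + 1) - b j - 2) (by omega) (by omega)
        rw [← Nat.add_sub_assoc (by omega)] at this
        grind
      · grind
    · exact .inr ⟨h2, hp.2.1, hp.2.2.1, hp.2.2.2.1⟩
    · rw [hp.1]
      exact .inr ⟨le_rfl, hp.2.1, fun i h1 h2 => by omega, hp.2.2.1⟩
  · refine .inr ⟨hl, fun M hM => ?_⟩
    have hxu : u (b j) = x (b j) := by
      rcases hP j with hp | hp | hp | hp
      · exact hp.2
      all_goals omega
    have hs : b (j + 1) = b j + 1 := by omega
    rcases hM with ⟨hM, h3, h5, -⟩ | ⟨hM, h4, h2, h5⟩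
    · have h6 := (hP (j + 1)).start.1
      rw [hs] at h6
      exact hn 2 (.inr (.inr ⟨rfl, hxu.trans h3, h6.1 (h5 1 le_rfl hM)⟩))
    · obtain ⟨ha, hc⟩ := twos_after_single hb.strictMono hP hs (fun i h1 h3 => .inl (h2 i h1 h3))
        (show 1 ≤ M - 1 by omega)
      rw [← Nat.add_sub_assoc (by omega)] at hc
      by_cases h55 : u (b j + M) = l5
      · refine hn (M + 1) (.inr (.inl ⟨by omega, hxu.trans h4, fun i h1 h3 =>
          (ha i h1 (by omega)).2, ?_, h55⟩))
        rw [show b j + (M + 1) - 2 = b j + M - 1 by omega]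
        exact hc.1 h5
      · exact hn M (.inl ⟨hM, hxu.trans h4, fun i h1 h3 => (ha i h1 h3).2, hc.1 h5, h55⟩)

/-- Windows prescribed block by block assemble to a sequence. -/
theorem exists_glue (h0 : b 0 = 0) (hb : StrictMono b) (f : ℕ → ℕ → Letter) :
    ∃ v : ℕ → Letter, ∀ j n, b j ≤ n → n < b (j + 1) → v n = f j n := by
  choose J hJ using exists_block h0 hb
  refine ⟨fun n => f (J n) n, fun j n h1 h2 => ?_⟩
  simp only [block_unique hb (hJ n).1 (hJ n).2 h1 h2]

end Transport

/-- `g(Ω) = Ω` and `g : Ω → Ω` is a bijection: `g` is well defined on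
`Ω` with values in `Ω` (existence and uniqueness of the image), surjective onto `Ω`,
and injective on `Ω`. -/
theorem stmt8 :
    (∀ x ∈ OmegaSeq, ∃ u, gRel x u ∧ u ∈ OmegaSeq) ∧
    (∀ x ∈ OmegaSeq, ∀ u v : ℕ → Letter, gRel x u → gRel x v → u = v) ∧
    (∀ u ∈ OmegaSeq, ∃ x ∈ OmegaSeq, gRel x u) ∧
    (∀ x ∈ OmegaSeq, ∀ y ∈ OmegaSeq, ∀ u : ℕ → Letter,
      gRel x u → gRel y u → x = y) := by
  refine ⟨fun x hx => ?_, fun x _ u v hu hv => ?_, fun u hu => ?_, fun x hx y hy u hxu hyu => ?_⟩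
  · obtain ⟨b, hb⟩ := Greedy.exists (Sp := ESpecial x) ESpecial.two_le
    have hex : ∀ j, ∃ v, Paired x v (b j) (b (j + 1) - b j) := fun j =>
      exists_paired_right ((hb.2 j).2.imp_right And.left)
    choose f hf using hex
    obtain ⟨u, hu⟩ := exists_glue hb.1 hb.strictMono f
    have hP : ∀ j, Paired x u (b j) (b (j + 1) - b j) := fun j =>
      (hf j).congr (fun _ _ _ => rfl) (fun n h1 h2 => hu j n h1 (by omega))
    exact ⟨u, gRel_iff.2 ⟨b, hb, hP⟩, (mem_Omega_iff hb.1 hb.strictMono hP).1 hx⟩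
  · obtain ⟨b, hb, hP⟩ := gRel_iff.1 hu
    obtain ⟨c, hc, hQ⟩ := gRel_iff.1 hv
    obtain rfl : b = c := Greedy.unique (Sp := ESpecial x) (fun _ _ _ => ESpecial.len_le) hb hc
    funext n
    obtain ⟨j, h1, h2⟩ := exists_block hb.1 hb.strictMono n
    exact (hP j).right_unique (hQ j) h1 (by omega)
  · obtain ⟨b, hb⟩ := Greedy.exists (Sp := FSpecial u) FSpecial.two_le
    have hex : ∀ j, ∃ y, Paired y u (b j) (b (j + 1) - b j) := fun j =>
      exists_paired_left ((hb.2 j).2.imp_right And.left)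
    choose f hf using hex
    obtain ⟨x, hx⟩ := exists_glue hb.1 hb.strictMono f
    have hP : ∀ j, Paired x u (b j) (b (j + 1) - b j) := fun j =>
      (hf j).congr (fun n h1 h2 => hx j n h1 (by omega)) (fun _ _ _ => rfl)
    exact ⟨x, (mem_Omega_iff hb.1 hb.strictMono hP).2 hu,
      gRel_iff.2 ⟨b, greedy_E_of_F hb hP, hP⟩⟩
  · obtain ⟨b, hb, hP⟩ := gRel_iff.1 hxu
    obtain ⟨c, hc, hQ⟩ := gRel_iff.1 hyu
    -- Both factorizations are the factorization of the common image into `F`-segments.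
    obtain rfl : b = c :=
      Greedy.unique (Sp := FSpecial u) (fun _ _ _ => FSpecial.len_le)
        (greedy_F_of_E hx hb hP) (greedy_F_of_E hy hc hQ)
    funext n
    obtain ⟨j, h1, h2⟩ := exists_block hb.1 hb.strictMono n
    exact (hP j).left_unique (hQ j) h1 (by omega)
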